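/- Consider the tensorized Hermite basis (h_n) of L²(ℝ³). There exists a constant C > 0 such that for all n: (i) ‖h_n‖_{L⁴(ℝ³)} ≤ C λ_n^{−1/4} (log λ_n)³, and (ii) ‖h_n‖_{L^∞(ℝ³)} ≤ C λ_n^{−1/6}. -/

import Mathlib

open MeasureTheory Complex Filter Set
open scoped ENNReal FourierTransform

noncomputable section

abbrev Rd (d : ℕ) := EuclideanSpace ℝ (Fin d)

/-- The one-dimensional Hermite function
`e_k(x) = (-1)^k (k!)^{-1/2} 2^{-k/2} π^{-1/4} e^{x²/2} (d^k/dx^k)(e^{-x²})`. -/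
def hermiteFun (k : ℕ) (x : ℝ) : ℝ :=
  (-1 : ℝ) ^ k *
    ((Nat.factorial k : ℝ) ^ (-(1/2 : ℝ)) * (2 : ℝ) ^ (-(k : ℝ)/2) *
      Real.pi ^ (-(1/4 : ℝ))) *
    Real.exp (x ^ 2 / 2) * iteratedDeriv k (fun y => Real.exp (-y ^ 2)) x

/-- The tensorized Hermite function on `ℝ³`: `h_n(x) = e_{n₁}(x₁)e_{n₂}(x₂)e_{n₃}(x₃)`. -/
def hermite3 (n : Fin 3 → ℕ) (x : Rd 3) : ℝ :=
  ∏ i, hermiteFun (n i) (x i)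

/-- The square root of the eigenvalue: `λ_n = √(2(n₁+n₂+n₃)+3)`. -/
def lam3 (n : Fin 3 → ℕ) : ℝ :=
  Real.sqrt (2 * (∑ i, (n i : ℝ)) + 3)

/-- `u` solves `d²u/dx² = (x² - L²) u` with derivative `v`, decays at `+∞`, and has WKB-normalized
initial data at the origin. -/
structure IsDecayingOscillator (L : ℝ) (u v : ℝ → ℝ) : Prop where
  hasDerivAt_fst : ∀ x, HasDerivAt u (v x) x
  hasDerivAt_snd : ∀ x, HasDerivAt v ((x ^ 2 - L ^ 2) * u x) x
  tendsto_mul_fst : Tendsto (fun x => x * u x) atTop (nhds 0)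
  tendsto_snd : Tendsto v atTop (nhds 0)
  initial_le : L * u 0 ^ 2 + v 0 ^ 2 / L ≤ 3

namespace IsDecayingOscillator

variable {a L : ℝ} {u v : ℝ → ℝ}

theorem tendsto_fst (h : IsDecayingOscillator L u v) : Tendsto u atTop (nhds 0) := by
  have := tendsto_inv_atTop_zero.mul h.tendsto_mul_fst
  rw [mul_zero] at this
  refine this.congr' ?_
  filter_upwards [eventually_gt_atTop 0] with y hy
  field_simp

/-- The WKB energy estimate up to the point where `(L² - x²)^{3/2}` falls below `L`. -/
theorem energy_le (h : IsDecayingOscillator (a ^ 3) u v) (ha : 1 ≤ a) {x : ℝ} (hx : 0 ≤ x)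
    (hxa : a ^ 2 ≤ (a ^ 3) ^ 2 - x ^ 2) :
    √((a ^ 3) ^ 2 - x ^ 2) * u x ^ 2 + v x ^ 2 / √((a ^ 3) ^ 2 - x ^ 2) ≤ 18 := by
  set s : ℝ → ℝ := fun y => √((a ^ 3) ^ 2 - y ^ 2) with hs
  have hq : ∀ y ∈ Icc 0 x, a ^ 2 ≤ (a ^ 3) ^ 2 - y ^ 2 := fun y hy => by
    nlinarith [hy.1, hy.2]
  have hs_sq : ∀ y ∈ Icc 0 x, s y ^ 2 = (a ^ 3) ^ 2 - y ^ 2 := fun y hy =>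
    Real.sq_sqrt (by nlinarith [hq y hy])
  have hs_ge : ∀ y ∈ Icc 0 x, a ≤ s y := fun y hy => Real.le_sqrt_of_sq_le (hq y hy)
  have hs_pos : ∀ y ∈ Icc 0 x, 0 < s y := fun y hy => by linarith [hs_ge y hy]
  have hs_deriv : ∀ y ∈ Icc 0 x, HasDerivAt s (-y / s y) y := fun y hy => by
    have h1 : HasDerivAt (fun y : ℝ => (a ^ 3) ^ 2 - y ^ 2) (-(2 * y)) y := by
      simpa using (hasDerivAt_pow 2 y).const_sub ((a ^ 3) ^ 2)
    have h2 := h1.sqrt (by nlinarith [hq y hy])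
    convert h2 using 1
    have := hs_pos y hy
    simp only [hs] at this ⊢
    field_simp
  have hm_le : ∀ y ∈ Icc 0 x, y / s y ^ 3 ≤ 1 := fun y hy => by
    have := hs_pos y hy
    rw [div_le_one (by positivity)]
    calc y ≤ a ^ 3 := by
          refine (sq_le_sq₀ hy.1 (by positivity)).1 ?_
          nlinarith [hq y hy]
      _ ≤ s y ^ 3 := by gcongr; exact hs_ge y hy
  have hm_deriv : ∀ y ∈ Icc 0 x,
      HasDerivAt (fun y => y / s y ^ 3) (1 / s y ^ 3 + 3 * y ^ 2 / s y ^ 5) y := fun y hy => by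
    have := hs_pos y hy
    refine ((hasDerivAt_id y).div ((hs_deriv y hy).pow 3)
      (pow_pos (hs_pos y hy) 3).ne').congr_deriv ?_
    simp only [id, Pi.pow_apply]
    push_cast
    field_simp
    ring
  set G : ℝ → ℝ := fun y => s y * u y ^ 2 + v y ^ 2 / s y - y / s y ^ 3 * (u y * v y) with hG
  have hG_deriv : ∀ y ∈ Icc 0 x,
      HasDerivAt G (-(1 / s y ^ 3 + 3 * y ^ 2 / s y ^ 5) * (u y * v y)) y := fun y hy => by
    have hp := hs_pos y hy
    have hu := h.hasDerivAt_fst y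
    have hv := h.hasDerivAt_snd y
    have hsd := hs_deriv y hy
    refine (((hsd.mul (hu.pow 2)).add ((hv.pow 2).div hsd hp.ne')).sub
      ((hm_deriv y hy).mul (hu.mul hv))).congr_deriv ?_
    have e : y ^ 2 - (a ^ 3) ^ 2 = - s y ^ 2 := by rw [hs_sq y hy]; ring
    rw [e]
    push_cast
    simp only [Pi.pow_apply, Pi.mul_apply]
    field_simp
    ring
  have huv : ∀ y ∈ Icc 0 x, |u y * v y| ≤ (s y * u y ^ 2 + v y ^ 2 / s y) / 2 := fun y hy => by
    have hp := hs_pos y hy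
    have e : (s y * u y ^ 2 + v y ^ 2 / s y) = ((s y * u y) ^ 2 + v y ^ 2) / s y := by field_simp
    rw [e, div_div, le_div_iff₀ (by positivity)]
    have : |u y * v y| * s y = |s y * u y| * |v y| := by
      rw [abs_mul, abs_mul, abs_of_pos hp]; ring
    nlinarith [two_mul_le_add_sq |s y * u y| |v y|, sq_abs (s y * u y), sq_abs (v y)]
  have hG_ge : ∀ y ∈ Icc 0 x, (s y * u y ^ 2 + v y ^ 2 / s y) / 2 ≤ G y := fun y hy => by
    have hp := hs_pos y hy
    have h0 : 0 ≤ y / s y ^ 3 := div_nonneg hy.1 (by positivity)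
    have h1 : y / s y ^ 3 * (u y * v y) ≤ 1 * |u y * v y| :=
      (mul_le_mul_of_nonneg_left (le_abs_self _) h0).trans
        (mul_le_mul_of_nonneg_right (hm_le y hy) (abs_nonneg _))
    have := huv y hy
    simp only [hG]
    linarith
  have hanti : AntitoneOn (fun y => G y * Real.exp (-(y / s y ^ 3))) (Icc 0 x) := by
    have hd : ∀ y ∈ Icc 0 x, HasDerivAt (fun y => G y * Real.exp (-(y / s y ^ 3))) _ y :=
      fun y hy => (hG_deriv y hy).mul (hm_deriv y hy).neg.exp
    refine antitoneOn_of_hasDerivWithinAt_nonpos (convex_Icc _ _)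
      (fun y hy => (hd y hy).continuousAt.continuousWithinAt)
      (fun y hy => (hd y (interior_subset hy)).hasDerivWithinAt) fun y hy => ?_
    replace hy := interior_subset hy
    have hp := hs_pos y hy
    have hm' : 0 ≤ 1 / s y ^ 3 + 3 * y ^ 2 / s y ^ 5 := by positivity
    set m' := 1 / s y ^ 3 + 3 * y ^ 2 / s y ^ 5
    have h1 : -(u y * v y) - G y ≤ 0 := by
      linarith [huv y hy, hG_ge y hy, neg_abs_le (u y * v y)]
    have h2 := mul_nonneg hm' (Real.exp_pos (-(y / s y ^ 3))).le
    simp only [Pi.neg_apply]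
    nlinarith [mul_nonneg h2 (neg_nonneg.2 h1)]
  have hx0 : (0 : ℝ) ∈ Icc 0 x := ⟨le_rfl, hx⟩
  have hxx : x ∈ Icc 0 x := ⟨hx, le_rfl⟩
  have h0 := hanti hx0 hxx hx
  have hs0 : s 0 = a ^ 3 := by
    simp only [hs]
    rw [zero_pow two_ne_zero, sub_zero, Real.sqrt_sq (by positivity)]
  have hG0 : G 0 ≤ 3 := by
    simp only [hG, hs0]
    simpa using h.initial_le
  simp only [zero_div, neg_zero, Real.exp_zero, mul_one] at h0
  have hGx := hG_ge x hxx
  have hGx0 : 0 ≤ G x := le_trans (by have := hs_pos x hxx; positivity) hGx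
  have hexp : 1 / 3 ≤ Real.exp (-(x / s x ^ 3)) := by
    calc (1 / 3 : ℝ) ≤ Real.exp (-1) := by
          rw [Real.exp_neg, one_div]
          exact inv_anti₀ (Real.exp_pos 1) Real.exp_one_lt_three.le
      _ ≤ _ := Real.exp_le_exp.2 (neg_le_neg (hm_le x hxx))
  change s x * u x ^ 2 + v x ^ 2 / s x ≤ 18
  nlinarith [mul_le_mul_of_nonneg_left hexp hGx0]

/-- Bounds past the WKB region, up to the turning point. -/
theorem sq_le_of_turning (h : IsDecayingOscillator (a ^ 3) u v) (ha : 1 ≤ a) {x : ℝ} (hx : 0 ≤ x)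
    (hxL : x ≤ a ^ 3) (hxa : (a ^ 3) ^ 2 - x ^ 2 ≤ a ^ 2) : u x ^ 2 ≤ 108 / a := by
  have ha0 : 0 < a := by linarith
  have hb0 : 0 ≤ (a ^ 3) ^ 2 - a ^ 2 := by
    have : a ^ 2 ≤ a ^ 6 := pow_le_pow_right₀ ha (by norm_num)
    nlinarith
  set b := √((a ^ 3) ^ 2 - a ^ 2) with hb
  have hb_sq : b ^ 2 = (a ^ 3) ^ 2 - a ^ 2 := Real.sq_sqrt hb0
  have hb_nn : 0 ≤ b := Real.sqrt_nonneg _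
  have hbx : b ≤ x := Real.sqrt_le_iff.2 ⟨hx, by linarith⟩
  have hE := h.energy_le ha hb_nn (by linarith)
  have e : √((a ^ 3) ^ 2 - b ^ 2) = a := by
    rw [hb_sq, sub_sub_cancel, Real.sqrt_sq ha0.le]
  rw [e] at hE
  have hub : u b ^ 2 ≤ 18 / a := by
    rw [le_div_iff₀ ha0]
    have : 0 ≤ v b ^ 2 / a := by positivity
    linarith
  have hE' : v b ^ 2 + a ^ 2 * u b ^ 2 ≤ 36 * a := by
    have : a * (a * u b ^ 2 + v b ^ 2 / a) ≤ a * 18 := by gcongr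
    have e2 : a * (a * u b ^ 2 + v b ^ 2 / a) = v b ^ 2 + a ^ 2 * u b ^ 2 := by field_simp; ring
    linarith
  have hanti : AntitoneOn (fun y => v y ^ 2 + ((a ^ 3) ^ 2 - y ^ 2) * u y ^ 2) (Icc b x) := by
    have hd : ∀ y, HasDerivAt (fun y => v y ^ 2 + ((a ^ 3) ^ 2 - y ^ 2) * u y ^ 2)
        (-2 * y * u y ^ 2) y := fun y => by
      have hu := h.hasDerivAt_fst y
      have hv := h.hasDerivAt_snd y
      refine ((hv.pow 2).add
        (((hasDerivAt_pow 2 y).const_sub ((a ^ 3) ^ 2)).mul (hu.pow 2))).congr_deriv ?_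
      push_cast
      simp only [Pi.pow_apply]
      ring
    refine antitoneOn_of_hasDerivWithinAt_nonpos (convex_Icc _ _)
      (fun y _ => (hd y).continuousAt.continuousWithinAt)
      (fun y _ => (hd y).hasDerivWithinAt) fun y hy => ?_
    have := (interior_subset hy).1
    have : 0 ≤ y := by linarith
    nlinarith [mul_nonneg this (sq_nonneg (u y))]
  have hv : ∀ y ∈ Icc b x, ‖v y‖ ≤ 6 * √a := fun y hy => by
    have h1 := hanti ⟨le_rfl, hbx⟩ hy hy.1
    simp only [hb_sq, sub_sub_cancel] at h1
    have h2 : 0 ≤ ((a ^ 3) ^ 2 - y ^ 2) * u y ^ 2 := by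
      refine mul_nonneg ?_ (sq_nonneg _)
      nlinarith [hy.1, hy.2]
    apply abs_le_of_sq_le_sq _ (by positivity)
    rw [mul_pow, Real.sq_sqrt ha0.le]
    linarith
  have hmv := (convex_Icc b x).norm_image_sub_le_of_norm_hasDerivWithin_le
    (fun y _ => (h.hasDerivAt_fst y).hasDerivWithinAt) hv ⟨le_rfl, hbx⟩ ⟨hbx, le_rfl⟩
  have hdist : x - b ≤ 1 / a := by
    rw [le_div_iff₀ ha0]
    have h1 : (a ^ 3 - b) * a ^ 3 ≤ a ^ 2 := by
      nlinarith [mul_nonneg (sub_nonneg.2 (hbx.trans hxL)) hb_nn]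
    have h2 : a ^ 2 * ((a ^ 3 - b) * a) ≤ a ^ 2 * 1 := by nlinarith
    have := le_of_mul_le_mul_left h2 (by positivity)
    nlinarith
  have hdiff : (u x - u b) ^ 2 ≤ 36 / a := by
    rw [Real.norm_eq_abs, Real.norm_of_nonneg (sub_nonneg.2 hbx)] at hmv
    have h1 : |u x - u b| ≤ 6 * √a * (1 / a) := hmv.trans (by gcongr)
    have h2 := pow_le_pow_left₀ (abs_nonneg _) h1 2
    rw [sq_abs] at h2
    refine h2.trans_eq ?_
    rw [mul_pow, mul_pow, Real.sq_sqrt ha0.le]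
    field_simp
    norm_num
  have e3 : 108 / a = 2 * (18 / a + 36 / a) := by ring
  rw [e3]
  nlinarith [sq_nonneg (u x - 2 * u b)]

theorem pow_four_mul_le_of_le (h : IsDecayingOscillator (a ^ 3) u v) (ha : 1 ≤ a) {x : ℝ}
    (hx : 0 ≤ x) (hxL : x ≤ a ^ 3) : u x ^ 4 * (a ^ 3 * (a ^ 3 - x) + a ^ 2) ≤ 23328 := by
  have ha0 : 0 < a := by linarith
  have hL : a ^ 3 * (a ^ 3 - x) ≤ (a ^ 3) ^ 2 - x ^ 2 := by
    nlinarith [mul_nonneg hx (sub_nonneg.2 hxL)]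
  rcases le_total ((a ^ 3) ^ 2 - x ^ 2) (a ^ 2) with hc | hc
  · have h1 := h.sq_le_of_turning ha hx hxL hc
    rw [le_div_iff₀ ha0] at h1
    have h2 : (u x ^ 2 * a) ^ 2 ≤ 108 ^ 2 := pow_le_pow_left₀ (by positivity) h1 2
    nlinarith [mul_le_mul_of_nonneg_left (hL.trans hc) (by positivity : 0 ≤ u x ^ 4)]
  · have h1 := h.energy_le ha hx hc
    set s := √((a ^ 3) ^ 2 - x ^ 2) with hs
    have hss : s ^ 2 = (a ^ 3) ^ 2 - x ^ 2 := Real.sq_sqrt (by nlinarith)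
    have hs0 : 0 ≤ s := Real.sqrt_nonneg _
    have h2 : s * u x ^ 2 ≤ 18 := by
      have : 0 ≤ v x ^ 2 / s := by positivity
      linarith
    have h3 : (s * u x ^ 2) ^ 2 ≤ 18 ^ 2 := pow_le_pow_left₀ (by positivity) h2 2
    have h4 : a ^ 3 * (a ^ 3 - x) + a ^ 2 ≤ 2 * s ^ 2 := by linarith
    nlinarith [mul_le_mul_of_nonneg_left h4 (by positivity : 0 ≤ u x ^ 4)]

theorem mul_nonpos_of_ge (h : IsDecayingOscillator L u v) (hL : 0 < L) :
    MonotoneOn (fun x => u x * v x) (Ici L) ∧ ∀ x, L ≤ x → u x * v x ≤ 0 := by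
  have hmono : MonotoneOn (fun x => u x * v x) (Ici L) := by
    have hd := fun y => (h.hasDerivAt_fst y).mul (h.hasDerivAt_snd y)
    refine monotoneOn_of_hasDerivWithinAt_nonneg (convex_Ici _)
      (fun y _ => (hd y).continuousAt.continuousWithinAt)
      (fun y _ => (hd y).hasDerivWithinAt) fun y hy => ?_
    have hy : L ≤ y := interior_subset hy
    have h1 : 0 ≤ y ^ 2 - L ^ 2 := by nlinarith
    nlinarith [mul_nonneg h1 (sq_nonneg (u y)), sq_nonneg (v y)]
  refine ⟨hmono, fun x hx => ?_⟩
  have ht : Tendsto (fun y => u y * v y) atTop (nhds 0) := by simpa using h.tendsto_fst.mul h.tendsto_snd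
  refine ge_of_tendsto ht ?_
  filter_upwards [eventually_ge_atTop x] with y hy
  exact hmono hx (hx.trans hy) hy

theorem sq_mul_le_sq_of_ge (h : IsDecayingOscillator L u v) (hL : 0 < L) {x : ℝ} (hx : L ≤ x) :
    (x ^ 2 - L ^ 2) * u x ^ 2 ≤ v x ^ 2 := by
  have hanti : AntitoneOn (fun y => v y ^ 2 - ((y * u y) ^ 2 - L ^ 2 * u y ^ 2)) (Ici L) := by
    have hd : ∀ y, HasDerivAt (fun y => v y ^ 2 - ((y * u y) ^ 2 - L ^ 2 * u y ^ 2))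
        (-2 * y * u y ^ 2) y := fun y => by
      have hu := h.hasDerivAt_fst y
      have hv := h.hasDerivAt_snd y
      refine ((hv.pow 2).sub ((((hasDerivAt_id y).mul hu).pow 2).sub
        ((hu.pow 2).const_mul (L ^ 2)))).congr_deriv ?_
      push_cast
      simp only [Pi.mul_apply, id]
      ring
    refine antitoneOn_of_hasDerivWithinAt_nonpos (convex_Ici _)
      (fun y _ => (hd y).continuousAt.continuousWithinAt)
      (fun y _ => (hd y).hasDerivWithinAt) fun y hy => ?_
    have hy : L ≤ y := interior_subset hy
    have : 0 ≤ y := by linarith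
    nlinarith [mul_nonneg this (sq_nonneg (u y))]
  have ht : Tendsto (fun y => v y ^ 2 - ((y * u y) ^ 2 - L ^ 2 * u y ^ 2)) atTop (nhds 0) := by
    simpa using (h.tendsto_snd.pow 2).sub
      ((h.tendsto_mul_fst.pow 2).sub ((h.tendsto_fst.pow 2).const_mul (L ^ 2)))
  have := le_of_tendsto ht (f := fun y => v y ^ 2 - ((y * u y) ^ 2 - L ^ 2 * u y ^ 2))
    (b := v x ^ 2 - ((x * u x) ^ 2 - L ^ 2 * u x ^ 2)) <| by
    filter_upwards [eventually_ge_atTop x] with y hy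
    exact hanti hx (hx.trans hy) hy
  nlinarith

theorem pow_four_mul_le_of_ge (h : IsDecayingOscillator (a ^ 3) u v) (ha : 1 ≤ a) {x : ℝ}
    (hxL : a ^ 3 ≤ x) : u x ^ 4 * (a ^ 2 * (1 + (a * (x - a ^ 3)) ^ 2)) ≤ 23328 := by
  have ha0 : 0 < a := by linarith
  have hL0 : 0 < a ^ 3 := by positivity
  obtain ⟨hmono, hneg⟩ := h.mul_nonpos_of_ge hL0
  have hL := h.sq_le_of_turning ha hL0.le le_rfl (by nlinarith)
  rw [le_div_iff₀ ha0] at hL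
  have hdrop : u x ^ 2 + 2 * (x - a ^ 3) * -(u x * v x) ≤ u (a ^ 3) ^ 2 := by
    have hanti : AntitoneOn (fun y => u y ^ 2 + y * (2 * -(u x * v x))) (Icc (a ^ 3) x) := by
      have hd := fun y => ((h.hasDerivAt_fst y).pow 2).add
        ((hasDerivAt_id y).mul_const (2 * -(u x * v x)))
      refine antitoneOn_of_hasDerivWithinAt_nonpos (convex_Icc _ _)
        (fun y _ => (hd y).continuousAt.continuousWithinAt)
        (fun y _ => (hd y).hasDerivWithinAt) fun y hy => ?_
      replace hy := interior_subset hy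
      have := hmono hy.1 hxL hy.2
      simp only at this
      push_cast
      nlinarith
    have := hanti ⟨le_rfl, hxL⟩ ⟨hxL, le_rfl⟩ hxL
    simp only at this
    nlinarith
  have hux : u x ^ 2 ≤ u (a ^ 3) ^ 2 := by
    nlinarith [mul_nonneg (sub_nonneg.2 hxL) (neg_nonneg.2 (hneg x hxL))]
  have hbase : u x ^ 4 * a ^ 2 ≤ 108 ^ 2 := by
    have h2 : (u x ^ 2 * a) ^ 2 ≤ 108 ^ 2 :=
      pow_le_pow_left₀ (by positivity) ((mul_le_mul_of_nonneg_right hux ha0.le).trans hL) 2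
    nlinarith
  rcases le_total (a * (x - a ^ 3)) 1 with hc | hc
  · have h0 : 0 ≤ a * (x - a ^ 3) := mul_nonneg ha0.le (sub_nonneg.2 hxL)
    have h1 : 1 + (a * (x - a ^ 3)) ^ 2 ≤ 2 := by nlinarith
    nlinarith [mul_le_mul_of_nonneg_left h1 (by positivity : 0 ≤ u x ^ 4 * a ^ 2)]
  · have hq : a ^ 2 ≤ x ^ 2 - (a ^ 3) ^ 2 := by
      have h1 : a ^ 2 * 1 ≤ a ^ 2 * (a * (x - a ^ 3)) := by gcongr
      nlinarith [sq_nonneg (x - a ^ 3)]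
    have hv : a * u x ^ 2 ≤ -(u x * v x) := by
      refine (sq_le_sq₀ (by positivity) (neg_nonneg.2 (hneg x hxL))).1 ?_
      have := h.sq_mul_le_sq_of_ge hL0 hxL
      have h2 : a ^ 2 * u x ^ 2 ≤ v x ^ 2 :=
        (mul_le_mul_of_nonneg_right hq (sq_nonneg _)).trans this
      nlinarith [mul_le_mul_of_nonneg_left h2 (sq_nonneg (u x))]
    have h3 : u x ^ 2 * a * (a * (x - a ^ 3)) ≤ 54 := by
      have h4 : (x - a ^ 3) * (a * u x ^ 2) ≤ (x - a ^ 3) * -(u x * v x) :=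
        mul_le_mul_of_nonneg_left hv (sub_nonneg.2 hxL)
      have h5 : 2 * (x - a ^ 3) * (a * u x ^ 2) ≤ u (a ^ 3) ^ 2 := by nlinarith [sq_nonneg (u x)]
      nlinarith [mul_le_mul_of_nonneg_right h5 ha0.le]
    have h4 : (u x ^ 2 * a * (a * (x - a ^ 3))) ^ 2 ≤ 54 ^ 2 :=
      pow_le_pow_left₀ (by positivity) h3 2
    nlinarith

end IsDecayingOscillator

theorem integral_inv_turning {a : ℝ} (ha : 1 ≤ a) :
    ∫ x in (0 : ℝ)..a ^ 3, (a ^ 3 * (a ^ 3 - x) + a ^ 2)⁻¹ = Real.log (a ^ 4 + 1) / a ^ 3 := by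
  have ha0 : 0 < a := by linarith
  have hpos : ∀ x ∈ uIcc 0 (a ^ 3), 0 < a ^ 3 * (a ^ 3 - x) + a ^ 2 := fun x hx => by
    rw [uIcc_of_le (by positivity)] at hx
    have := mul_nonneg (pow_pos ha0 3).le (sub_nonneg.2 hx.2)
    positivity
  have hd : ∀ x ∈ uIcc 0 (a ^ 3),
      HasDerivAt (fun x => -(Real.log (a ^ 3 * (a ^ 3 - x) + a ^ 2) / a ^ 3))
        (a ^ 3 * (a ^ 3 - x) + a ^ 2)⁻¹ x := fun x hx => by
    have hp := hpos x hx
    refine ((((((hasDerivAt_id x).const_sub (a ^ 3)).const_mul (a ^ 3)).add_const (a ^ 2)).log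
      hp.ne').div_const (a ^ 3)).neg.congr_deriv ?_
    simp only [id]
    field_simp
  rw [intervalIntegral.integral_eq_sub_of_hasDerivAt hd
    (ContinuousOn.intervalIntegrable (ContinuousOn.inv₀ (by fun_prop) fun x hx => (hpos x hx).ne'))]
  have e : a ^ 3 * (a ^ 3 - 0) + a ^ 2 = a ^ 2 * (a ^ 4 + 1) := by ring
  rw [e, Real.log_mul (by positivity) (by positivity), sub_self, mul_zero, zero_add]
  ring

theorem IsDecayingOscillator.pow_four_mul_le {a : ℝ} {u v : ℝ → ℝ}
    (h : IsDecayingOscillator (a ^ 3) u v) (ha : 1 ≤ a) {x : ℝ} (hx : 0 ≤ x) :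
    u x ^ 4 * a ^ 2 ≤ 23328 := by
  have ha0 : 0 < a := by linarith
  rcases le_total x (a ^ 3) with hc | hc
  · refine le_trans ?_ (h.pow_four_mul_le_of_le ha hx hc)
    gcongr
    exact le_add_of_nonneg_left (mul_nonneg (by positivity) (sub_nonneg.2 hc))
  · refine le_trans ?_ (h.pow_four_mul_le_of_ge ha hc)
    gcongr
    exact le_mul_of_one_le_right (by positivity) (le_add_of_nonneg_right (sq_nonneg _))

theorem IsDecayingOscillator.integral_pow_four_le {a : ℝ} {u v : ℝ → ℝ}
    (h : IsDecayingOscillator (a ^ 3) u v) (ha : 1 ≤ a) :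
    IntegrableOn (fun x => u x ^ 4) (Ioi 0) ∧
      ∫ x in Ioi 0, u x ^ 4 ≤ 23328 * (Real.log (a ^ 4 + 1) + Real.pi) / a ^ 3 := by
  have ha0 : 0 < a := by linarith
  have hL0 : 0 < a ^ 3 := by positivity
  have hcont : Continuous fun x => u x ^ 4 :=
    (continuous_iff_continuousAt.2 fun x => (h.hasDerivAt_fst x).continuousAt).pow 4
  have hint₁ : IntegrableOn (fun x => u x ^ 4) (Ioc 0 (a ^ 3)) :=
    (hcont.intervalIntegrable 0 (a ^ 3)).1
  have hpos : ∀ x ∈ Icc 0 (a ^ 3), 0 < a ^ 3 * (a ^ 3 - x) + a ^ 2 := fun x hx => by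
    have := mul_nonneg (pow_pos ha0 3).le (sub_nonneg.2 hx.2)
    positivity
  have hle₁ : ∫ x in Ioc 0 (a ^ 3), u x ^ 4 ≤ 23328 * (Real.log (a ^ 4 + 1) / a ^ 3) := by
    rw [← intervalIntegral.integral_of_le hL0.le, ← integral_inv_turning ha,
      ← intervalIntegral.integral_const_mul]
    refine intervalIntegral.integral_mono_on hL0.le (hcont.intervalIntegrable _ _)
      (ContinuousOn.intervalIntegrable ?_) fun x hx => ?_
    · rw [uIcc_of_le hL0.le]
      exact continuousOn_const.mul (ContinuousOn.inv₀ (by fun_prop) fun x hx => (hpos x hx).ne')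
    · rw [← div_eq_mul_inv, le_div_iff₀ (hpos x hx)]
      exact h.pow_four_mul_le_of_le ha hx.1 hx.2
  set g : ℝ → ℝ := fun x => 23328 / a ^ 2 * (1 + (a * (x - a ^ 3)) ^ 2)⁻¹ with hg
  have hgint : Integrable g :=
    ((integrable_inv_one_add_sq.comp_mul_left' ha0.ne').comp_sub_right (a ^ 3)).const_mul _
  have hgval : ∫ x, g x = 23328 * Real.pi / a ^ 3 := by
    simp only [hg]
    rw [integral_const_mul, integral_sub_right_eq_self (fun x => (1 + (a * x) ^ 2)⁻¹) (a ^ 3),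
      Measure.integral_comp_mul_left (fun x => (1 + x ^ 2)⁻¹) a, integral_univ_inv_one_add_sq,
      abs_of_pos (inv_pos.2 ha0), smul_eq_mul]
    field_simp
  have hug : ∀ x ∈ Ioi (a ^ 3), u x ^ 4 ≤ g x := fun x hx => by
    have := h.pow_four_mul_le_of_ge ha (le_of_lt hx)
    rw [hg]
    simp only
    rw [← div_eq_mul_inv, div_div, le_div_iff₀ (by positivity)]
    exact this
  have hint₂ : IntegrableOn (fun x => u x ^ 4) (Ioi (a ^ 3)) := by
    refine hgint.integrableOn.mono' hcont.aestronglyMeasurable ?_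
    refine (ae_restrict_iff' measurableSet_Ioi).2 (ae_of_all _ fun x hx => ?_)
    rw [Real.norm_of_nonneg (by positivity)]
    exact hug x hx
  have hle₂ : ∫ x in Ioi (a ^ 3), u x ^ 4 ≤ 23328 * Real.pi / a ^ 3 := by
    rw [← hgval]
    refine (setIntegral_mono_on hint₂ hgint.integrableOn measurableSet_Ioi hug).trans ?_
    exact setIntegral_le_integral hgint (ae_of_all _ fun x => by simp only [hg]; positivity)
  rw [← Ioc_union_Ioi_eq_Ioi hL0.le]
  refine ⟨hint₁.union hint₂, ?_⟩
  rw [setIntegral_union (Ioc_disjoint_Ioi le_rfl) measurableSet_Ioi hint₁ hint₂]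
  refine (add_le_add hle₁ hle₂).trans_eq ?_
  ring

open Polynomial in
/-- The polynomials with `(d/dx)^k e^{-x²} = gaussPoly k · e^{-x²}`. -/
def gaussPoly : ℕ → ℝ[X]
  | 0 => 1
  | k + 1 => derivative (gaussPoly k) - 2 * X * gaussPoly k

section Hermite
open Polynomial

theorem derivative_gaussPoly_succ (k : ℕ) :
    derivative (gaussPoly (k + 1)) = -2 * ((k : ℝ[X]) + 1) * gaussPoly k := by
  induction k with
  | zero => simp [gaussPoly]
  | succ k ih =>
    have e : gaussPoly (k + 2) = derivative (gaussPoly (k + 1)) - 2 * X * gaussPoly (k + 1) := rfl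
    have e' : gaussPoly (k + 1) = derivative (gaussPoly k) - 2 * X * gaussPoly k := rfl
    rw [e, ih]
    simp only [derivative_sub, derivative_mul, derivative_neg, derivative_add, derivative_X,
      derivative_natCast, derivative_one, derivative_ofNat]
    rw [ih, Nat.cast_succ]
    linear_combination (2 * ((k : ℝ[X]) + 1)) * e'

theorem gaussPoly_ode (k : ℕ) :
    derivative (derivative (gaussPoly k)) =
      2 * X * derivative (gaussPoly k) - 2 * (k : ℝ[X]) * gaussPoly k := by
  have h := derivative_gaussPoly_succ k
  rw [gaussPoly] at h
  simp only [derivative_sub, derivative_mul, derivative_X, derivative_ofNat] at h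
  linear_combination h

theorem eval_zero_gaussPoly_succ_succ (k : ℕ) :
    (gaussPoly (k + 2)).eval 0 = -2 * ((k : ℝ) + 1) * (gaussPoly k).eval 0 := by
  rw [gaussPoly, derivative_gaussPoly_succ]
  simp

theorem iteratedDeriv_exp_neg_sq (k : ℕ) :
    iteratedDeriv k (fun y : ℝ => Real.exp (-y ^ 2)) =
      fun x => (gaussPoly k).eval x * Real.exp (-x ^ 2) := by
  induction k with
  | zero => ext x; simp [gaussPoly]
  | succ k ih =>
    rw [iteratedDeriv_succ, ih]
    ext x
    refine HasDerivAt.deriv ?_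
    refine (((gaussPoly k).hasDerivAt x).mul ((hasDerivAt_pow 2 x).neg.exp)).congr_deriv ?_
    simp only [gaussPoly, eval_sub, eval_mul, eval_X, Pi.neg_apply, eval_ofNat]
    push_cast
    ring

/-- The normalizing constant of the Hermite function, with its sign. -/
def hermiteCoeff (k : ℕ) : ℝ :=
  (-1 : ℝ) ^ k *
    ((Nat.factorial k : ℝ) ^ (-(1/2 : ℝ)) * (2 : ℝ) ^ (-(k : ℝ)/2) * Real.pi ^ (-(1/4 : ℝ)))

theorem hermiteFun_eq (k : ℕ) (x : ℝ) :
    hermiteFun k x = (C (hermiteCoeff k) * gaussPoly k).eval x * Real.exp (-(x ^ 2 / 2)) := by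
  have e : Real.exp (-(x ^ 2 / 2)) = Real.exp (x ^ 2 / 2) * Real.exp (-x ^ 2) := by
    rw [← Real.exp_add]; ring_nf
  rw [hermiteFun, iteratedDeriv_exp_neg_sq, e, eval_mul, eval_C, hermiteCoeff]
  ring

theorem hermiteCoeff_sq_le (k : ℕ) : hermiteCoeff k ^ 2 ≤ ((Nat.factorial k : ℝ) * 2 ^ k)⁻¹ := by
  have h1 : ((Nat.factorial k : ℝ) ^ (-(1/2 : ℝ))) ^ 2 = (Nat.factorial k : ℝ)⁻¹ := by
    rw [← Real.rpow_natCast, ← Real.rpow_mul (by positivity)]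
    norm_num [Real.rpow_neg_one]
  have h2 : ((2 : ℝ) ^ (-(k : ℝ)/2)) ^ 2 = (2 ^ k)⁻¹ := by
    rw [← Real.rpow_natCast, ← Real.rpow_mul (by positivity), ← Real.rpow_natCast,
      ← Real.rpow_neg (by positivity)]
    congr 1
    push_cast
    ring
  have h3 : Real.pi ^ (-(1/4 : ℝ)) ≤ 1 :=
    Real.rpow_le_one_of_one_le_of_nonpos (by linarith [Real.pi_gt_three]) (by norm_num)
  have h3' : (Real.pi ^ (-(1/4 : ℝ))) ^ 2 ≤ 1 :=
    pow_le_one₀ (Real.rpow_nonneg Real.pi_pos.le _) h3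
  rw [hermiteCoeff, mul_pow, mul_pow, mul_pow, ← pow_mul, mul_comm k 2, pow_mul, neg_one_sq,
    one_pow, one_mul, h1, h2, mul_inv]
  exact mul_le_of_le_one_right (by positivity) h3'

theorem gaussPoly_zero_sq_le (k : ℕ) :
    (((gaussPoly k).eval 0) ^ 2 / ((Nat.factorial k : ℝ) * 2 ^ k)) ^ 2 * (k + 1) ≤ 1 := by
  induction k using Nat.twoStepInduction with
  | zero => simp [gaussPoly]
  | one => simp [gaussPoly]
  | more k ih _ =>
    set A := (gaussPoly k).eval 0 ^ 2 / ((Nat.factorial k : ℝ) * 2 ^ k) with hA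
    have e : (gaussPoly (k + 2)).eval 0 ^ 2 / ((Nat.factorial (k + 2) : ℝ) * 2 ^ (k + 2)) =
        A * ((k + 1) / (k + 2)) := by
      rw [eval_zero_gaussPoly_succ_succ, hA, Nat.factorial_succ, Nat.factorial_succ]
      push_cast
      have := Nat.factorial_pos k
      field_simp
      ring
    rw [e]
    have h1 : ((k + 1 : ℝ) / (k + 2)) ^ 2 * (k + 3) ≤ k + 1 := by
      rw [div_pow, div_mul_eq_mul_div, div_le_iff₀ (by positivity)]
      have hk : (0 : ℝ) ≤ k := k.cast_nonneg
      nlinarith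
    push_cast
    calc (A * ((k + 1) / (k + 2))) ^ 2 * ((k : ℝ) + 2 + 1)
        = A ^ 2 * (((k + 1 : ℝ) / (k + 2)) ^ 2 * (k + 3)) := by ring
      _ ≤ A ^ 2 * (k + 1) := by gcongr
      _ ≤ 1 := ih

theorem hermite_initial_le (k : ℕ) {L : ℝ} (hL0 : 0 < L) (hL : L ^ 2 = 2 * k + 1) :
    L * (hermiteCoeff k * (gaussPoly k).eval 0) ^ 2 +
      (hermiteCoeff k * (derivative (gaussPoly k)).eval 0) ^ 2 / L ≤ 3 := by
  have hk : (0 : ℝ) ≤ k := k.cast_nonneg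
  have hsq : ∀ j, (((gaussPoly j).eval 0) ^ 2 / ((Nat.factorial j : ℝ) * 2 ^ j)) ≤ 1 / √(j + 1) := by
    intro j
    rw [le_div_iff₀ (by positivity)]
    refine (sq_le_one_iff₀ (by positivity)).1 ?_
    rw [mul_pow, Real.sq_sqrt (by positivity)]
    exact gaussPoly_zero_sq_le j
  have hbound : ∀ y : ℝ, (hermiteCoeff k * y) ^ 2 ≤ y ^ 2 / ((Nat.factorial k : ℝ) * 2 ^ k) := by
    intro y
    rw [mul_pow, div_eq_inv_mul]
    gcongr
    exact hermiteCoeff_sq_le k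
  have h1 : L * (hermiteCoeff k * (gaussPoly k).eval 0) ^ 2 ≤ 3 / 2 := by
    have hs : L ≤ 3 / 2 * √(k + 1) := by
      refine (sq_le_sq₀ hL0.le (by positivity)).1 ?_
      rw [mul_pow, Real.sq_sqrt (by positivity)]
      nlinarith
    calc _ ≤ L * (1 / √(k + 1)) := by gcongr; exact (hbound _).trans (hsq k)
      _ ≤ 3 / 2 := by
        rw [mul_one_div, div_le_iff₀ (by positivity)]
        exact hs
  have h2 : (hermiteCoeff k * (derivative (gaussPoly k)).eval 0) ^ 2 / L ≤ 3 / 2 := by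
    rw [div_le_iff₀ hL0]
    rcases k with _ | j
    · simp [gaussPoly]
      positivity
    · refine (hbound _).trans ?_
      rw [derivative_gaussPoly_succ]
      have e : (eval 0 (-2 * ((j : ℝ[X]) + 1) * gaussPoly j)) ^ 2 /
          ((Nat.factorial (j + 1) : ℝ) * 2 ^ (j + 1)) =
          2 * (j + 1) * ((gaussPoly j).eval 0 ^ 2 / ((Nat.factorial j : ℝ) * 2 ^ j)) := by
        rw [Nat.factorial_succ]
        push_cast
        have := Nat.factorial_pos j
        simp only [eval_mul, eval_neg, eval_add, eval_natCast, eval_one, eval_ofNat]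
        field_simp
        ring
      rw [e]
      push_cast at hL hk
      have hj : (0 : ℝ) ≤ j := j.cast_nonneg
      calc _ ≤ 2 * ((j : ℝ) + 1) * (1 / √(j + 1)) :=
            mul_le_mul_of_nonneg_left (hsq j) (by positivity)
        _ = 2 * √(j + 1) := by
          have : (j : ℝ) + 1 = √(j + 1) * √(j + 1) := (Real.mul_self_sqrt (by positivity)).symm
          have hp : 0 < √((j : ℝ) + 1) := by positivity
          field_simp
          linarith
        _ ≤ 3 / 2 * L := by
          refine (sq_le_sq₀ (by positivity) (by positivity)).1 ?_
          rw [mul_pow, mul_pow, Real.sq_sqrt (by positivity), hL]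
          nlinarith
  linarith

theorem tendsto_eval_mul_gaussian (Q : ℝ[X]) :
    Tendsto (fun x => Q.eval x * Real.exp (-(x ^ 2 / 2))) atTop (nhds 0) := by
  have h := ((Q.tendsto_div_exp_atTop).norm.mul_const (Real.exp (1 / 2)))
  rw [norm_zero, zero_mul] at h
  refine squeeze_zero_norm (fun x => ?_) h
  have e : Real.exp (-(x ^ 2 / 2)) = (Real.exp x)⁻¹ * Real.exp (x - x ^ 2 / 2) := by
    rw [← Real.exp_neg, ← Real.exp_add]; ring_nf
  rw [e, ← mul_assoc, ← div_eq_mul_inv, norm_mul, Real.norm_of_nonneg (Real.exp_pos (x - _)).le]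
  gcongr
  nlinarith [sq_nonneg (x - 1)]

/-- The derivative of the Hermite function. -/
def hermiteFunDeriv (k : ℕ) (x : ℝ) : ℝ :=
  (C (hermiteCoeff k) * (derivative (gaussPoly k) - X * gaussPoly k)).eval x *
    Real.exp (-(x ^ 2 / 2))

theorem hasDerivAt_eval_mul_gaussian (Q : ℝ[X]) (x : ℝ) :
    HasDerivAt (fun x => Q.eval x * Real.exp (-(x ^ 2 / 2)))
      ((derivative Q - X * Q).eval x * Real.exp (-(x ^ 2 / 2))) x := by
  refine ((Q.hasDerivAt x).mul (((hasDerivAt_pow 2 x).div_const 2).neg.exp)).congr_deriv ?_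
  simp only [eval_sub, eval_mul, eval_X, Pi.neg_apply]
  push_cast
  ring

theorem hasDerivAt_hermiteFun (k : ℕ) (x : ℝ) :
    HasDerivAt (hermiteFun k) (hermiteFunDeriv k x) x := by
  rw [funext (hermiteFun_eq k)]
  refine (hasDerivAt_eval_mul_gaussian _ x).congr_deriv ?_
  rw [hermiteFunDeriv, derivative_C_mul]
  ring_nf

theorem hasDerivAt_hermiteFunDeriv (k : ℕ) (x : ℝ) :
    HasDerivAt (hermiteFunDeriv k) ((x ^ 2 - (2 * k + 1)) * hermiteFun k x) x := by
  refine (hasDerivAt_eval_mul_gaussian _ x).congr_deriv ?_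
  rw [hermiteFun_eq, derivative_C_mul]
  simp only [derivative_sub, derivative_mul, derivative_X, gaussPoly_ode,
    eval_sub, eval_mul, eval_X, eval_add, eval_natCast, eval_one, eval_ofNat, eval_C]
  ring

theorem isDecayingOscillator_hermiteFun (k : ℕ) {L : ℝ} (hL0 : 0 < L) (hL : L ^ 2 = 2 * k + 1) :
    IsDecayingOscillator L (hermiteFun k) (hermiteFunDeriv k) where
  hasDerivAt_fst := hasDerivAt_hermiteFun k
  hasDerivAt_snd x := by rw [hL]; exact hasDerivAt_hermiteFunDeriv k x
  tendsto_mul_fst := by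
    refine (tendsto_eval_mul_gaussian (X * (C (hermiteCoeff k) * gaussPoly k))).congr fun x => ?_
    rw [hermiteFun_eq, eval_mul (p := X), eval_X, mul_assoc]
  tendsto_snd := tendsto_eval_mul_gaussian _
  initial_le := by
    simpa [hermiteFun_eq, hermiteFunDeriv] using hermite_initial_le k hL0 hL

theorem isDecayingOscillator_hermiteFun_neg (k : ℕ) {L : ℝ} (hL0 : 0 < L)
    (hL : L ^ 2 = 2 * k + 1) :
    IsDecayingOscillator L (fun x => hermiteFun k (-x)) (fun x => -hermiteFunDeriv k (-x)) where
  hasDerivAt_fst x := by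
    simpa [Function.comp_def] using (hasDerivAt_hermiteFun k (-x)).comp x (hasDerivAt_neg x)
  hasDerivAt_snd x := by
    refine ((hasDerivAt_hermiteFunDeriv k (-x)).comp x (hasDerivAt_neg x)).neg.congr_deriv ?_
    rw [hL]
    ring
  tendsto_mul_fst := by
    refine (tendsto_eval_mul_gaussian
      (X * (C (hermiteCoeff k) * gaussPoly k).comp (-X))).congr fun x => ?_
    rw [hermiteFun_eq, eval_mul (p := X), eval_X, eval_comp, eval_neg, eval_X, neg_sq, mul_assoc]
  tendsto_snd := by
    refine (tendsto_eval_mul_gaussian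
      (-(C (hermiteCoeff k) * (derivative (gaussPoly k) - X * gaussPoly k)).comp (-X))).congr
        fun x => ?_
    rw [hermiteFunDeriv, eval_neg, eval_comp, eval_neg, eval_X, neg_sq, neg_mul]
  initial_le := by
    simpa [hermiteFun_eq, hermiteFunDeriv] using hermite_initial_le k hL0 hL

end Hermite

/-- The sixth root of the eigenvalue `2k + 1`. -/
def hermiteScale (k : ℕ) : ℝ := (2 * k + 1 : ℝ) ^ (1 / 6 : ℝ)

theorem one_le_hermiteScale (k : ℕ) : 1 ≤ hermiteScale k :=
  Real.one_le_rpow (by linarith [(k.cast_nonneg : (0 : ℝ) ≤ k)]) (by norm_num)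

theorem hermiteScale_pow (k : ℕ) : (hermiteScale k ^ 3) ^ 2 = 2 * k + 1 := by
  rw [← pow_mul, hermiteScale, ← Real.rpow_natCast, ← Real.rpow_mul (by positivity)]
  norm_num

theorem hermiteFun_pow_four_mul_le (k : ℕ) (x : ℝ) :
    hermiteFun k x ^ 4 * hermiteScale k ^ 2 ≤ 23328 := by
  have ha := one_le_hermiteScale k
  have hL0 : 0 < hermiteScale k ^ 3 := by positivity
  rcases le_total 0 x with hx | hx
  · exact (isDecayingOscillator_hermiteFun k hL0 (hermiteScale_pow k)).pow_four_mul_le ha hx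
  · simpa using (isDecayingOscillator_hermiteFun_neg k hL0 (hermiteScale_pow k)).pow_four_mul_le ha
      (neg_nonneg.2 hx)

theorem continuous_hermiteFun (k : ℕ) : Continuous (hermiteFun k) :=
  continuous_iff_continuousAt.2 fun x => (hasDerivAt_hermiteFun k x).continuousAt

theorem integral_hermiteFun_pow_four_le (k : ℕ) :
    Integrable (fun x => hermiteFun k x ^ 4) ∧
      ∫ x, hermiteFun k x ^ 4 ≤
        46656 * (Real.log (hermiteScale k ^ 4 + 1) + Real.pi) / hermiteScale k ^ 3 := by
  have ha := one_le_hermiteScale k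
  have hL0 : 0 < hermiteScale k ^ 3 := by positivity
  obtain ⟨hi, hle⟩ :=
    (isDecayingOscillator_hermiteFun k hL0 (hermiteScale_pow k)).integral_pow_four_le ha
  obtain ⟨hi', hle'⟩ :=
    (isDecayingOscillator_hermiteFun_neg k hL0 (hermiteScale_pow k)).integral_pow_four_le ha
  have hi'' : IntegrableOn (fun x => hermiteFun k x ^ 4) (Iic 0) := by
    rw [integrableOn_Iic_iff_integrableOn_Iio]
    simpa using hi'.comp_neg
  rw [integral_comp_neg_Ioi 0 (fun x => hermiteFun k x ^ 4), neg_zero] at hle'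
  have hint : Integrable (fun x => hermiteFun k x ^ 4) := by
    rw [← integrableOn_univ, ← Iic_union_Ioi (a := (0 : ℝ))]
    exact hi''.union hi
  refine ⟨hint, ?_⟩
  rw [← intervalIntegral.integral_Iic_add_Ioi hi'' hi]
  refine (add_le_add hle' hle).trans_eq ?_
  ring

theorem half_le_log_lam3 (n : Fin 3 → ℕ) : 1 / 2 ≤ Real.log (lam3 n) := by
  have hS : (0 : ℝ) ≤ ∑ i, (n i : ℝ) := by positivity
  rw [lam3, Real.log_sqrt (by positivity)]
  have : 1 ≤ Real.log (2 * (∑ i, (n i : ℝ)) + 3) := by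
    rw [Real.le_log_iff_exp_le (by positivity)]
    linarith [Real.exp_one_lt_three]
  linarith

theorem lam3_pos (n : Fin 3 → ℕ) : 0 < lam3 n := Real.sqrt_pos.2 (by positivity)

theorem lam3_sq (n : Fin 3 → ℕ) : lam3 n ^ 2 = 2 * (∑ i, (n i : ℝ)) + 3 :=
  Real.sq_sqrt (by positivity)

/-- The product of the one-dimensional eigenvalues dominates the eigenvalue of the tensor product. -/
theorem lam3_sq_le_prod (n : Fin 3 → ℕ) :
    lam3 n ^ 2 ≤ 3 * ∏ i, (2 * (n i : ℝ) + 1) := by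
  rw [lam3_sq, Fin.sum_univ_three, Fin.prod_univ_three]
  have h0 : (0 : ℝ) ≤ n 0 := Nat.cast_nonneg _
  have h1 : (0 : ℝ) ≤ n 1 := Nat.cast_nonneg _
  have h2 : (0 : ℝ) ≤ n 2 := Nat.cast_nonneg _
  nlinarith [mul_nonneg h0 h1, mul_nonneg h0 h2, mul_nonneg h1 h2,
    mul_nonneg (mul_nonneg h0 h1) h2]

theorem integral_hermiteFun_pow_four_le_log (n : Fin 3 → ℕ) (i : Fin 3) :
    ∫ x, hermiteFun (n i) x ^ 4 ≤ 466560 * Real.log (lam3 n) / hermiteScale (n i) ^ 3 := by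
  have ha := one_le_hermiteScale (n i)
  have hlog := half_le_log_lam3 n
  refine (integral_hermiteFun_pow_four_le (n i)).2.trans ?_
  gcongr ?_ / _
  have h1 : hermiteScale (n i) ^ 4 + 1 ≤ lam3 n ^ 2 := by
    have h2 : hermiteScale (n i) ^ 4 ≤ (hermiteScale (n i) ^ 3) ^ 2 := by
      rw [← pow_mul]; exact pow_le_pow_right₀ ha (by norm_num)
    rw [hermiteScale_pow] at h2
    have h3 : (n i : ℝ) ≤ ∑ j, (n j : ℝ) :=
      Finset.single_le_sum (f := fun j => (n j : ℝ)) (fun _ _ => Nat.cast_nonneg _)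
        (Finset.mem_univ i)
    rw [lam3_sq]
    linarith
  have h2 : Real.log (hermiteScale (n i) ^ 4 + 1) ≤ 2 * Real.log (lam3 n) := by
    have := Real.log_le_log (by positivity) h1
    rwa [Real.log_pow] at this
  linarith [Real.pi_lt_four]

theorem prod_hermiteScale_pow_sq (n : Fin 3 → ℕ) :
    (∏ i, hermiteScale (n i) ^ 3) ^ 2 = ∏ i, (2 * (n i : ℝ) + 1) := by
  rw [← Finset.prod_pow]
  exact Finset.prod_congr rfl fun i _ => hermiteScale_pow _

theorem lam3_le_prod (n : Fin 3 → ℕ) : lam3 n ≤ 2 * ∏ i, hermiteScale (n i) ^ 3 := by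
  have hp : 0 < ∏ i, hermiteScale (n i) ^ 3 :=
    Finset.prod_pos fun i _ => pow_pos (zero_lt_one.trans_le (one_le_hermiteScale _)) 3
  refine (sq_le_sq₀ (lam3_pos n).le (by positivity)).1 ?_
  have := lam3_sq_le_prod n
  rw [← prod_hermiteScale_pow_sq] at this
  nlinarith

theorem integral_hermite3_pow_four_le (n : Fin 3 → ℕ) :
    Integrable (fun x => hermite3 n x ^ 4) ∧
      ∫ x, hermite3 n x ^ 4 ≤ 2 * 466560 ^ 3 * Real.log (lam3 n) ^ 3 / lam3 n := by
  have hmp := PiLp.volume_preserving_ofLp (Fin 3)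
  have hemb : MeasurableEmbedding (@WithLp.ofLp 2 (Fin 3 → ℝ)) :=
    (MeasurableEquiv.toLp 2 (Fin 3 → ℝ)).symm.measurableEmbedding
  have e : (fun x => hermite3 n x ^ 4) =
      (fun y : Fin 3 → ℝ => ∏ i, hermiteFun (n i) (y i) ^ 4) ∘ (@WithLp.ofLp 2 (Fin 3 → ℝ)) := by
    ext x
    simp [hermite3, Finset.prod_pow]
  have hprod : 0 < ∏ i, hermiteScale (n i) ^ 3 :=
    Finset.prod_pos fun i _ => pow_pos (zero_lt_one.trans_le (one_le_hermiteScale _)) 3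
  have hlam := lam3_pos n
  have hlog : 0 < Real.log (lam3 n) := by linarith [half_le_log_lam3 n]
  constructor
  · rw [e, hmp.integrable_comp_emb hemb]
    exact Integrable.fintype_prod fun i => (integral_hermiteFun_pow_four_le (n i)).1
  · have : ∫ x, hermite3 n x ^ 4 = ∏ i, ∫ x, hermiteFun (n i) x ^ 4 := by
      rw [← integral_fintype_prod_volume_eq_prod (fun i x => hermiteFun (n i) x ^ 4),
        ← hmp.integral_comp hemb]
      exact integral_congr_ae (ae_of_all _ fun x => congrFun e x)
    rw [this]
    calc ∏ i, ∫ x, hermiteFun (n i) x ^ 4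
        ≤ ∏ i, 466560 * Real.log (lam3 n) / hermiteScale (n i) ^ 3 :=
          Finset.prod_le_prod (fun i _ => integral_nonneg fun x => by positivity)
            fun i _ => integral_hermiteFun_pow_four_le_log n i
      _ = 466560 ^ 3 * Real.log (lam3 n) ^ 3 / ∏ i, hermiteScale (n i) ^ 3 := by
          rw [Finset.prod_div_distrib, Finset.prod_const, Finset.card_univ, Fintype.card_fin,
            mul_pow]
      _ ≤ _ := by
          rw [div_le_div_iff₀ hprod hlam]
          have := mul_le_mul_of_nonneg_left (lam3_le_prod n)
            (by positivity : 0 ≤ 466560 ^ 3 * Real.log (lam3 n) ^ 3)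
          linarith

theorem eLpNorm_four_hermite3_le (n : Fin 3 → ℕ) :
    eLpNorm (hermite3 n) 4 volume ≤
      ENNReal.ofReal (1000000 * lam3 n ^ (-(1/4 : ℝ)) * Real.log (lam3 n) ^ 3) := by
  obtain ⟨hint, hle⟩ := integral_hermite3_pow_four_le n
  have hlam := lam3_pos n
  have hlog := half_le_log_lam3 n
  have h0 : ∀ x, 0 ≤ hermite3 n x ^ 4 := fun x => by positivity
  rw [eLpNorm_eq_lintegral_rpow_enorm_toReal (by norm_num) (by norm_num)]
  have e : ∫⁻ x, ‖hermite3 n x‖ₑ ^ (4 : ℝ≥0∞).toReal = ENNReal.ofReal (∫ x, hermite3 n x ^ 4) := by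
    rw [ofReal_integral_eq_lintegral_ofReal hint (ae_of_all _ h0)]
    refine lintegral_congr fun x => ?_
    rw [ENNReal.toReal_ofNat, ← ofReal_norm,
      ENNReal.ofReal_rpow_of_nonneg (norm_nonneg _) (by norm_num)]
    congr 1
    rw [show (4 : ℝ) = ((4 : ℕ) : ℝ) by norm_num, Real.rpow_natCast, Real.norm_eq_abs]
    exact Even.pow_abs (by decide) _
  rw [e, ENNReal.ofReal_rpow_of_nonneg (integral_nonneg h0) (by norm_num), ENNReal.toReal_ofNat]
  refine ENNReal.ofReal_le_ofReal ?_
  refine (Real.rpow_le_rpow (integral_nonneg h0) hle (by norm_num)).trans ?_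
  rw [one_div, Real.rpow_inv_le_iff_of_pos (by positivity) (by positivity) (by norm_num),
    show (4 : ℝ) = ((4 : ℕ) : ℝ) by norm_num, Real.rpow_natCast, mul_pow, mul_pow,
    ← Real.rpow_natCast (lam3 n ^ _), ← Real.rpow_mul hlam.le]
  have e2 : lam3 n ^ (-((4 : ℕ) : ℝ)⁻¹ * ((4 : ℕ) : ℝ)) = (lam3 n)⁻¹ := by
    norm_num [Real.rpow_neg_one]
  rw [e2, div_eq_mul_inv]
  set l := Real.log (lam3 n)
  have h9 : 1 ≤ (2 * l) ^ 9 := one_le_pow₀ (by linarith)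
  have hl3 : 0 ≤ l ^ 3 := by positivity
  have h12 : l ^ 3 ≤ 512 * (l ^ 3) ^ 4 := by nlinarith
  calc 2 * 466560 ^ 3 * l ^ 3 * (lam3 n)⁻¹
      ≤ 2 * 466560 ^ 3 * (512 * (l ^ 3) ^ 4) * (lam3 n)⁻¹ := by gcongr
    _ = (2 * 466560 ^ 3 * 512) * (lam3 n)⁻¹ * (l ^ 3) ^ 4 := by ring
    _ ≤ _ := by gcongr; norm_num

theorem abs_hermite3_le (n : Fin 3 → ℕ) (x : Rd 3) :
    |hermite3 n x| ≤ 1000000 * lam3 n ^ (-(1/6 : ℝ)) := by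
  have hlam := lam3_pos n
  have hprod : 0 < ∏ i, (2 * (n i : ℝ) + 1) := Finset.prod_pos fun i _ => by positivity
  have h1 : ∀ i, hermiteFun (n i) (x i) ^ 12 ≤ 23328 ^ 3 / (2 * (n i : ℝ) + 1) := fun i => by
    have ha := one_le_hermiteScale (n i)
    rw [le_div_iff₀ (by positivity), ← hermiteScale_pow]
    refine le_trans (le_of_eq ?_)
      (pow_le_pow_left₀ (by positivity) (hermiteFun_pow_four_mul_le (n i) (x i)) 3)
    ring
  have h2 : hermite3 n x ^ 12 ≤ 3 * (23328 ^ 3) ^ 3 / lam3 n ^ 2 := by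
    rw [hermite3, ← Finset.prod_pow]
    calc ∏ i, hermiteFun (n i) (x i) ^ 12 ≤ ∏ i, 23328 ^ 3 / (2 * (n i : ℝ) + 1) :=
          Finset.prod_le_prod (fun i _ => Even.pow_nonneg (by decide) _) fun i _ => h1 i
      _ = (23328 ^ 3) ^ 3 / ∏ i, (2 * (n i : ℝ) + 1) := by
          rw [Finset.prod_div_distrib, Finset.prod_const, Finset.card_univ, Fintype.card_fin]
      _ ≤ _ := by
          rw [div_le_div_iff₀ hprod (by positivity)]
          have := lam3_sq_le_prod n
          linarith
  refine le_of_pow_le_pow_left₀ (n := 12) (by norm_num) (by positivity) ?_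
  rw [Even.pow_abs (by decide), mul_pow, ← Real.rpow_natCast (lam3 n ^ _), ← Real.rpow_mul hlam.le]
  have e2 : lam3 n ^ (-(1 / 6 : ℝ) * ((12 : ℕ) : ℝ)) = (lam3 n ^ 2)⁻¹ := by
    rw [← Real.rpow_natCast, ← Real.rpow_neg hlam.le]
    norm_num
  rw [e2]
  refine h2.trans ?_
  rw [div_eq_mul_inv]
  gcongr
  norm_num

/-- Dispersive bounds for the tensorized Hermite functions on `ℝ³`:
`‖h_n‖_{L⁴} ≤ C λ_n^{-1/4} (log λ_n)³` and `‖h_n‖_{L^∞} ≤ C λ_n^{-1/6}`. -/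
theorem statement_8 :
    ∃ C : ℝ, 0 < C ∧ ∀ n : Fin 3 → ℕ,
      eLpNorm (hermite3 n) 4 volume ≤
        ENNReal.ofReal (C * lam3 n ^ (-(1/4 : ℝ)) * Real.log (lam3 n) ^ 3) ∧
      eLpNorm (hermite3 n) ∞ volume ≤
        ENNReal.ofReal (C * lam3 n ^ (-(1/6 : ℝ))) := by
  refine ⟨1000000, by norm_num, fun n => ⟨eLpNorm_four_hermite3_le n, ?_⟩⟩
  rw [eLpNorm_exponent_top]
  refine eLpNormEssSup_le_of_ae_bound (ae_of_all _ fun x => ?_)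
  exact abs_hermite3_le n x

end
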